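/- Let 1 ≤ p ≤ ∞. There exists a constant C > 0 such that for all Schwartz functions a₁, a₂ on ℝ^d and all Schwartz functions f on ℝ^d, the symbol a(x,ω) = a₁(x)·a₂(ω) satisfies ‖a(x,D)f‖_{M^{p,p}} ≤ C · ‖a₁‖_{W(F L¹, L^∞)} · ‖a₂‖_{W(F L¹, L^∞)} · ‖f‖_{M^{p,p}}. (Tensor-product symbols with both factors in W(F L¹, L^∞) give operators bounded on M^p.) -/

import Mathlib

open MeasureTheory SchwartzMap Complex ENNReal NNReal

noncomputable section

/-- Mixed `L^p`-type norm of an `ℝ≥0∞`-valued function, with the usual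
`essSup` modification when `p = ∞`. -/
def lqNorm {α : Type*} [MeasurableSpace α] (μ : Measure α) (p : ℝ≥0∞)
    (f : α → ℝ≥0∞) : ℝ≥0∞ :=
  if p = ∞ then essSup f μ else (∫⁻ a, f a ^ p.toReal ∂μ) ^ (1 / p.toReal)

/-- Conjugate exponent in `ℝ≥0∞` : `1/p + 1/p' = 1`, with `1' = ∞`, `∞' = 1`. -/
def dualExp (p : ℝ≥0∞) : ℝ≥0∞ :=
  if p = 1 then ∞ else if p = ∞ then 1 else ENNReal.ofReal (p.toReal / (p.toReal - 1))

/-- `1/p` as a real number, with the convention `1/∞ = 0`. -/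
def invR (p : ℝ≥0∞) : ℝ := (p⁻¹).toReal

/-- The Gaussian window `G(t) = exp(-π |t|²)` (as a complex-valued function). -/
def gaussWin {ι : Type*} [Fintype ι] (t : EuclideanSpace ℝ ι) : ℂ :=
  Complex.exp (-(Real.pi * ‖t‖ ^ 2))

/-- Short-time Fourier transform with Gaussian window:
`V_G F (x, ω) = ∫ F t * conj (G (t - x)) * exp (-2πi ω⬝t) dt`. -/
def STFT {ι : Type*} [Fintype ι] (F : EuclideanSpace ℝ ι → ℂ)
    (x ω : EuclideanSpace ℝ ι) : ℂ :=
  ∫ t, F t * (starRingEnd ℂ) (gaussWin (t - x)) *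
    Complex.exp (Complex.I * (-(2 * Real.pi * (inner ℝ ω t : ℝ))))

/-- Modulation space norm `M^{p,q}`. -/
def modNorm {ι : Type*} [Fintype ι] (p q : ℝ≥0∞)
    (F : EuclideanSpace ℝ ι → ℂ) : ℝ≥0∞ :=
  lqNorm volume q fun ω => lqNorm volume p fun x => (‖STFT F x ω‖₊ : ℝ≥0∞)

/-- Wiener amalgam norm `W(𝓕 L^p, L^q)` (local component Fourier–Lebesgue). -/
def wFLNorm {ι : Type*} [Fintype ι] (p q : ℝ≥0∞)
    (F : EuclideanSpace ℝ ι → ℂ) : ℝ≥0∞ :=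
  lqNorm volume q fun x => lqNorm volume p fun ω => (‖STFT F x ω‖₊ : ℝ≥0∞)

/-- The unit cube `[0,1)^d`. -/
def unitCube (d : ℕ) : Set (EuclideanSpace ℝ (Fin d)) :=
  {x | ∀ i, x i ∈ Set.Ico (0 : ℝ) 1}

/-- Wiener amalgam norm
`‖f‖_{W(L^r,L^s)} = ( Σ_{n ∈ ℤ^d} ( ∫_{[0,1)^d} |f(x+n)|^r dx )^{s/r} )^{1/s}`. -/
def wNorm (d : ℕ) (r s : ℝ≥0∞) (f : EuclideanSpace ℝ (Fin d) → ℂ) : ℝ≥0∞ :=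
  lqNorm (Measure.count : Measure (Fin d → ℤ)) s fun n =>
    lqNorm (volume.restrict (unitCube d)) r fun x =>
      (‖f (x + show EuclideanSpace ℝ (Fin d) from WithLp.toLp 2 fun i => (n i : ℝ))‖₊ : ℝ≥0∞)

/-- Pairing `(x, ω) ∈ ℝ^d × ℝ^d ↦ ℝ^{2d}`. -/
def pairE {d : ℕ} (x ω : EuclideanSpace ℝ (Fin d)) :
    EuclideanSpace ℝ (Fin d ⊕ Fin d) :=
  WithLp.toLp 2 fun i => Sum.elim (fun j => x j) (fun j => ω j) i

/-- First (space) component of a point of `ℝ^{2d}`. -/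
def xpart {d : ℕ} (z : EuclideanSpace ℝ (Fin d ⊕ Fin d)) :
    EuclideanSpace ℝ (Fin d) := WithLp.toLp 2 fun i => z (Sum.inl i)

/-- Second (frequency) component of a point of `ℝ^{2d}`. -/
def wpart {d : ℕ} (z : EuclideanSpace ℝ (Fin d ⊕ Fin d)) :
    EuclideanSpace ℝ (Fin d) := WithLp.toLp 2 fun i => z (Sum.inr i)

/-- Fourier transform `f̂(ω) = ∫ f t e^{-2πi t⬝ω} dt`. -/
def fTrans {ι : Type*} [Fintype ι] (f : EuclideanSpace ℝ ι → ℂ)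
    (ω : EuclideanSpace ℝ ι) : ℂ :=
  ∫ t, f t * Complex.exp (Complex.I * (-(2 * Real.pi * (inner ℝ t ω : ℝ))))

/-- Kohn–Nirenberg operator `a(x,D) f (x) = ∫ a(x,ω) f̂(ω) e^{2πi x⬝ω} dω`. -/
def KNop {d : ℕ} (a : EuclideanSpace ℝ (Fin d ⊕ Fin d) → ℂ)
    (f : EuclideanSpace ℝ (Fin d) → ℂ) (x : EuclideanSpace ℝ (Fin d)) : ℂ :=
  ∫ ω, a (pairE x ω) * fTrans f ω *
    Complex.exp (Complex.I * (2 * Real.pi * (inner ℝ x ω : ℝ)))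

/-- Weyl operator `L_σ f (x) = ∫∫ e^{2πi (x-y)⬝ω} σ((x+y)/2, ω) f(y) dy dω`. -/
def weylOp {d : ℕ} (σ : EuclideanSpace ℝ (Fin d ⊕ Fin d) → ℂ)
    (f : EuclideanSpace ℝ (Fin d) → ℂ) (x : EuclideanSpace ℝ (Fin d)) : ℂ :=
  ∫ y, ∫ ω, Complex.exp (Complex.I * (2 * Real.pi * (inner ℝ (x - y) ω : ℝ))) *
    σ (pairE ((2 : ℝ)⁻¹ • (x + y)) ω) * f y

/-- Cross-Wigner distribution
`W(g,f)(x,ω) = ∫ g(x+t/2) conj(f(x−t/2)) e^{−2πi ω⬝t} dt`. -/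
def wigner {d : ℕ} (g f : EuclideanSpace ℝ (Fin d) → ℂ)
    (z : EuclideanSpace ℝ (Fin d ⊕ Fin d)) : ℂ :=
  ∫ t, g (xpart z + (2 : ℝ)⁻¹ • t) * (starRingEnd ℂ) (f (xpart z - (2 : ℝ)⁻¹ • t)) *
    Complex.exp (Complex.I * (-(2 * Real.pi * (inner ℝ (wpart z) t : ℝ))))

end

/-!
For a tensor symbol, `a(x, D) f = a₁ · 𝓕⁻¹(a₂ · 𝓕 f)`. Since `M^{p,p}` is the `L^p` norm of the
short-time Fourier transform `V F` over phase space, on which the Fourier transform acts as a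
rotation up to unimodular factors, it suffices to bound multiplication by a function `a` on
`M^{p,p}`.

With the squared window `G²`, the short-time Fourier transform of `a · F` is the convolution in
frequency of `V a` and `V F`. As `G` is an average of translates of `G²`, with a Gaussian density
`k`, the function `|V (a · F)|` is dominated by the integral operator with kernel
`k (y - x) |V a (y, ω - ξ)|` applied to `|V F (y, ξ)|`. The row and column integrals of this kernel
are at most `‖k‖_{L¹} ‖a‖_{W(𝓕L¹, L^∞)}`, and Schur's test gives the bound for all `p` at once.
-/

open Function
open scoped FourierTransform RealInnerProductSpace

section LpNorms

variable {α β : Type*} [MeasurableSpace α] [MeasurableSpace β] {μ : Measure α} {ν : Measure β}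
  {p : ℝ≥0∞}

lemma lqNorm_eq_eLpNorm (hp : p ≠ 0) (f : α → ℝ≥0∞) : lqNorm μ p f = eLpNorm f p μ := by
  by_cases hp' : p = ∞
  · simp [lqNorm, hp', eLpNormEssSup]
  · simp [lqNorm, hp', eLpNorm_eq_lintegral_rpow_enorm_toReal hp hp']

lemma essSup_essSup_eq_essSup_prod [SFinite μ] [SFinite ν] {f : α × β → ℝ≥0∞}
    (hf : Measurable f) :
    essSup (fun y ↦ essSup (fun x ↦ f (x, y)) μ) ν = essSup f (μ.prod ν) := by
  have ae_prod_le_iff (c : ℝ≥0∞) :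
      (∀ᵐ z ∂μ.prod ν, f z ≤ c) ↔ ∀ᵐ y ∂ν, ∀ᵐ x ∂μ, f (x, y) ≤ c := by
    have hs : MeasurableSet {z | f z ≤ c} := measurableSet_le hf measurable_const
    rw [Measure.ae_prod_iff_ae_ae hs, Measure.ae_ae_comm hs]
  apply le_antisymm
  · exact essSup_le_of_ae_le _ (((ae_prod_le_iff _).1 (ENNReal.ae_le_essSup f)).mono
      fun _ ↦ essSup_le_of_ae_le _)
  · refine essSup_le_of_ae_le _ ((ae_prod_le_iff _).2 ?_)
    filter_upwards [ENNReal.ae_le_essSup (μ := ν) fun y ↦ essSup (fun x ↦ f (x, y)) μ] with y hy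
    exact (ENNReal.ae_le_essSup _).mono fun x hx ↦ hx.trans hy

lemma eLpNorm_eLpNorm_eq_eLpNorm_prod [SFinite μ] [SFinite ν] {f : α × β → ℝ≥0∞}
    (hf : Measurable f) (p : ℝ≥0∞) :
    eLpNorm (fun y ↦ eLpNorm (fun x ↦ f (x, y)) p μ) p ν = eLpNorm f p (μ.prod ν) := by
  rcases eq_or_ne p 0 with rfl | hp
  · simp
  rcases eq_or_ne p ∞ with rfl | hp'
  · simpa [eLpNormEssSup] using essSup_essSup_eq_essSup_prod hf
  · have hr : p.toReal ≠ 0 := (ENNReal.toReal_pos hp hp').ne'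
    simp only [eLpNorm_eq_lintegral_rpow_enorm_toReal hp hp', enorm_eq_self, ← ENNReal.rpow_mul,
      one_div_mul_cancel hr, ENNReal.rpow_one]
    rw [lintegral_prod_symm' _ (hf.pow_const _)]

lemma lintegral_mul_rpow_le {k h : α → ℝ≥0∞} (hk : AEMeasurable k μ) (hh : AEMeasurable h μ)
    {r : ℝ} (hr : 1 ≤ r) :
    (∫⁻ x, k x * h x ∂μ) ^ r ≤ (∫⁻ x, k x ∂μ) ^ (r - 1) * ∫⁻ x, k x * h x ^ r ∂μ := by
  have hr₀ : 0 < r := one_pos.trans_le hr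
  have hr' : 0 ≤ 1 - 1 / r := sub_nonneg.2 ((div_le_one hr₀).2 hr)
  have split (x : α) : k x ^ (1 - 1 / r) * (k x * h x ^ r) ^ (1 / r) = k x * h x := by
    rw [ENNReal.mul_rpow_of_nonneg _ _ (by positivity), ← mul_assoc,
      ← ENNReal.rpow_add_of_nonneg _ _ hr' (by positivity), ← ENNReal.rpow_mul,
      sub_add_cancel, mul_one_div_cancel hr₀.ne', ENNReal.rpow_one, ENNReal.rpow_one]
  have hölder := ENNReal.lintegral_mul_norm_pow_le hk (hk.mul (hh.pow_const r)) hr'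
    (by positivity : 0 ≤ 1 / r) (by ring)
  simp only [Pi.mul_apply, split] at hölder
  calc (∫⁻ x, k x * h x ∂μ) ^ r
      ≤ ((∫⁻ x, k x ∂μ) ^ (1 - 1 / r) * (∫⁻ x, k x * h x ^ r ∂μ) ^ (1 / r)) ^ r := by gcongr
    _ = (∫⁻ x, k x ∂μ) ^ (r - 1) * ∫⁻ x, k x * h x ^ r ∂μ := by
        rw [ENNReal.mul_rpow_of_nonneg _ _ hr₀.le, ← ENNReal.rpow_mul, ← ENNReal.rpow_mul,
          one_div_mul_cancel hr₀.ne', ENNReal.rpow_one, sub_mul, one_mul,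
          one_div_mul_cancel hr₀.ne']

variable [SFinite μ] [SFinite ν] {K : α → β → ℝ≥0∞} {h : β → ℝ≥0∞} {C : ℝ≥0∞}

lemma lintegral_rpow_lintegral_mul_le_of_schur (hK : Measurable (uncurry K)) (hh : Measurable h)
    (hrow : ∀ᵐ x ∂μ, ∫⁻ y, K x y ∂ν ≤ C) (hcol : ∀ᵐ y ∂ν, ∫⁻ x, K x y ∂μ ≤ C)
    {r : ℝ} (hr : 1 ≤ r) :
    ∫⁻ x, (∫⁻ y, K x y * h y ∂ν) ^ r ∂μ ≤ C ^ r * ∫⁻ y, h y ^ r ∂ν := by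
  calc ∫⁻ x, (∫⁻ y, K x y * h y ∂ν) ^ r ∂μ
      ≤ ∫⁻ x, C ^ (r - 1) * ∫⁻ y, K x y * h y ^ r ∂ν ∂μ := by
        refine lintegral_mono_ae (hrow.mono fun x hx ↦ ?_)
        refine (lintegral_mul_rpow_le (by fun_prop) hh.aemeasurable hr).trans ?_
        gcongr
    _ = C ^ (r - 1) * ∫⁻ y, (∫⁻ x, K x y ∂μ) * h y ^ r ∂ν := by
        rw [lintegral_const_mul _ (by fun_prop), lintegral_lintegral_swap (by fun_prop)]
        congr! 3 with y
        exact lintegral_mul_const _ (by fun_prop)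
    _ ≤ C ^ (r - 1) * ∫⁻ y, C * h y ^ r ∂ν := by
        refine mul_le_mul_right (lintegral_mono_ae (hcol.mono fun y hy ↦ ?_)) _
        gcongr
    _ = C ^ r * ∫⁻ y, h y ^ r ∂ν := by
        rw [lintegral_const_mul _ (by fun_prop), ← mul_assoc]
        congr 1
        nth_rw 2 [← ENNReal.rpow_one C]
        rw [← ENNReal.rpow_add_of_nonneg _ _ (sub_nonneg.2 hr) zero_le_one, sub_add_cancel]

theorem eLpNorm_lintegral_mul_le_of_schur (hK : Measurable (uncurry K)) (hh : Measurable h)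
    (hrow : ∀ᵐ x ∂μ, ∫⁻ y, K x y ∂ν ≤ C) (hcol : ∀ᵐ y ∂ν, ∫⁻ x, K x y ∂μ ≤ C) (hp : 1 ≤ p) :
    eLpNorm (fun x ↦ ∫⁻ y, K x y * h y ∂ν) p μ ≤ C * eLpNorm h p ν := by
  rcases eq_or_ne p ∞ with rfl | hp'
  · simp only [eLpNorm_exponent_top, eLpNormEssSup, enorm_eq_self]
    refine essSup_le_of_ae_le _ (hrow.mono fun x hx ↦ ?_)
    calc ∫⁻ y, K x y * h y ∂ν
        ≤ ∫⁻ y, K x y * essSup h ν ∂ν :=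
          lintegral_mono_ae ((ENNReal.ae_le_essSup h).mono fun y hy ↦ by gcongr)
      _ = (∫⁻ y, K x y ∂ν) * essSup h ν := lintegral_mul_const _ (by fun_prop)
      _ ≤ C * essSup h ν := by gcongr
  · have hp₀ : p ≠ 0 := (one_pos.trans_le hp).ne'
    have hr : 1 ≤ p.toReal := by simpa using ENNReal.toReal_mono hp' hp
    have hr₀ : p.toReal ≠ 0 := (one_pos.trans_le hr).ne'
    simp only [eLpNorm_eq_lintegral_rpow_enorm_toReal hp₀ hp', enorm_eq_self]
    calc (∫⁻ x, (∫⁻ y, K x y * h y ∂ν) ^ p.toReal ∂μ) ^ (1 / p.toReal)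
        ≤ (C ^ p.toReal * ∫⁻ y, h y ^ p.toReal ∂ν) ^ (1 / p.toReal) := by
          gcongr
          exact lintegral_rpow_lintegral_mul_le_of_schur hK hh hrow hcol hr
      _ = C * (∫⁻ y, h y ^ p.toReal ∂ν) ^ (1 / p.toReal) := by
          rw [ENNReal.mul_rpow_of_nonneg _ _ (by positivity), ← ENNReal.rpow_mul,
            mul_one_div_cancel hr₀, ENNReal.rpow_one]

end LpNorms

section Fourier

variable {V : Type*} [NormedAddCommGroup V] [InnerProductSpace ℝ V] [FiniteDimensional ℝ V]
  [MeasurableSpace V] [BorelSpace V] {u v : V → ℂ}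

lemma fourier_fourierChar_smul (u : V → ℂ) (ω η : V) :
    𝓕 (fun t ↦ 𝐞 (-⟪t, ω⟫) • u t) η = 𝓕 u (η + ω) := by
  simp only [Real.fourier_eq, smul_smul, ← AddChar.map_add_eq_mul, inner_add_right, neg_add]

lemma fourier_comp_sub_right (u : V → ℂ) (x ω : V) :
    𝓕 (fun t ↦ u (t - x)) ω = 𝐞 (-⟪x, ω⟫) • 𝓕 u ω := by
  simpa [comp_def, sub_eq_add_neg] using!
    congrFun (VectorFourier.fourierIntegral_comp_add_right 𝐞 volume (innerₗ V) u (-x)) ω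

lemma integral_fourier_mul_eq_integral_mul_fourier (hu : Integrable u) (hv : Integrable v) :
    ∫ t, 𝓕 u t * v t = ∫ t, u t * 𝓕 v t := by
  simpa only [flip_innerₗ] using! VectorFourier.integral_fourierIntegral_smul_eq_flip
    (L := innerₗ V) Real.continuous_fourierChar continuous_inner hu hv

lemma integrable_fourierChar_smul_iff (ω : V) :
    Integrable (fun t ↦ 𝐞 (-⟪t, ω⟫) • u t) ↔ Integrable u :=
  Real.fourierIntegral_convergent_iff ω

lemma fourier_integral_eq_integral_fourier {α : Type*} [MeasurableSpace α] {μ : Measure α}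
    [SFinite μ] {Φ : α → V → ℂ} (hΦ : Integrable (uncurry Φ) (μ.prod volume)) (ω : V) :
    𝓕 (fun t ↦ ∫ y, Φ y t ∂μ) ω = ∫ y, 𝓕 (Φ y) ω ∂μ := by
  have hint : Integrable (uncurry fun y t ↦ 𝐞 (-⟪t, ω⟫) • Φ y t) (μ.prod volume) := by
    refine hΦ.mono ?_ (.of_forall fun z ↦ by simp [uncurry_def])
    have hchar : Continuous fun t : V ↦ 𝐞 (-⟪t, ω⟫) := by fun_prop
    exact (hchar.comp_aestronglyMeasurable measurable_snd.aestronglyMeasurable).smul hΦ.1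
  simp only [Real.fourier_eq, Circle.smul_def, ← integral_smul]
  exact (integral_integral_swap hint).symm

/-- The class of functions for which Fourier inversion holds pointwise: continuous integrable
functions with integrable Fourier transform. It contains the Schwartz functions, and it is stable
under products and under the Fourier transform. -/
structure IsFourierInvertible (u : V → ℂ) : Prop where
  continuous : Continuous u
  integrable : Integrable u
  integrable_fourier : Integrable (𝓕 u)

lemma isFourierInvertible_schwartz (f : 𝓢(V, ℂ)) : IsFourierInvertible f :=
  ⟨f.continuous, f.integrable, (𝓕 f).integrable⟩

namespace IsFourierInvertible

lemma fourier_fourierInv (hu : IsFourierInvertible u) : 𝓕 (𝓕⁻ u) = u :=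
  hu.continuous.fourier_fourierInv_eq hu.integrable hu.integrable_fourier

lemma fourier_fourier (hu : IsFourierInvertible u) : 𝓕 (𝓕 u) = fun t ↦ u (-t) := by
  ext t
  rw [← neg_neg t, ← Real.fourierInv_eq_fourier_neg,
    hu.continuous.fourierInv_fourier_eq hu.integrable hu.integrable_fourier, neg_neg]

lemma fourier (hu : IsFourierInvertible u) : IsFourierInvertible (𝓕 u) where
  continuous := VectorFourier.fourierIntegral_continuous Real.continuous_fourierChar
    continuous_inner hu.integrable
  integrable := hu.integrable_fourier
  integrable_fourier := hu.fourier_fourier ▸ hu.integrable.comp_neg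

lemma fourierInv (hu : IsFourierInvertible u) : IsFourierInvertible (𝓕⁻ u) := by
  have heq : 𝓕⁻ u = fun t ↦ 𝓕 u (-t) := funext (Real.fourierInv_eq_fourier_neg u)
  refine ⟨?_, ?_, hu.fourier_fourierInv.symm ▸ hu.integrable⟩
  · exact heq ▸ hu.fourier.continuous.comp continuous_neg
  · exact heq ▸ hu.integrable_fourier.comp_neg

lemma fourier_mul_eq_integral (hv : IsFourierInvertible v) (hu : Integrable u) (ω : V) :
    𝓕 (fun t ↦ v t * u t) ω = ∫ ξ, 𝓕 v (ω - ξ) * 𝓕 u ξ := by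
  calc 𝓕 (fun t ↦ v t * u t) ω
      = ∫ t, 𝓕 (𝓕⁻ v) t * 𝐞 (-⟪t, ω⟫) • u t := by
        rw [hv.fourier_fourierInv, Real.fourier_eq]
        simp only [mul_smul_comm]
    _ = ∫ η, 𝓕⁻ v η * 𝓕 u (η + ω) := by
        rw [integral_fourier_mul_eq_integral_mul_fourier hv.fourierInv.integrable
          ((integrable_fourierChar_smul_iff ω).2 hu)]
        simp only [fourier_fourierChar_smul]
    _ = ∫ ξ, 𝓕 v (ω - ξ) * 𝓕 u ξ := by
        rw [← integral_sub_right_eq_self _ ω]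
        simp only [Real.fourierInv_eq_fourier_neg, neg_sub, sub_add_cancel]

lemma integrable_mul (hv : IsFourierInvertible v) (hu : Integrable u) :
    Integrable fun t ↦ v t * u t := by
  refine hu.bdd_mul (c := ∫ η, ‖𝓕⁻ v η‖) hv.continuous.aestronglyMeasurable
    (.of_forall fun t ↦ ?_)
  nth_rw 1 [← hv.fourier_fourierInv]
  exact VectorFourier.norm_fourierIntegral_le_integral_norm 𝐞 volume (innerₗ V) (𝓕⁻ v) t

lemma mul (hv : IsFourierInvertible v) (hu : IsFourierInvertible u) :
    IsFourierInvertible fun t ↦ v t * u t where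
  continuous := hv.continuous.mul hu.continuous
  integrable := hv.integrable_mul hu.integrable
  integrable_fourier := by
    have hconv := hu.integrable_fourier.integrable_convolution (ContinuousLinearMap.mul ℂ ℂ)
      hv.integrable_fourier
    refine hconv.congr (.of_forall fun ω ↦ ?_)
    rw [hv.fourier_mul_eq_integral hu.integrable]
    simp only [MeasureTheory.convolution, ContinuousLinearMap.mul_apply', mul_comm]

end IsFourierInvertible

end Fourier

section GaussianWindow

variable {ι : Type*} [Fintype ι]

lemma gaussWin_eq_ofReal (t : EuclideanSpace ℝ ι) :
    gaussWin t = (Real.exp (-Real.pi * ‖t‖ ^ 2) : ℝ) := by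
  simp [gaussWin]

lemma conj_gaussWin (t : EuclideanSpace ℝ ι) : starRingEnd ℂ (gaussWin t) = gaussWin t := by
  rw [gaussWin_eq_ofReal, Complex.conj_ofReal]

lemma gaussWin_sub_comm (s t : EuclideanSpace ℝ ι) : gaussWin (s - t) = gaussWin (t - s) := by
  rw [gaussWin, gaussWin, norm_sub_rev]

lemma norm_gaussWin (t : EuclideanSpace ℝ ι) :
    ‖gaussWin t‖ = Real.exp (-Real.pi * ‖t‖ ^ 2) := by
  rw [gaussWin_eq_ofReal, Complex.norm_real, Real.norm_of_nonneg (Real.exp_nonneg _)]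

lemma norm_gaussWin_le_one (t : EuclideanSpace ℝ ι) : ‖gaussWin t‖ ≤ 1 := by
  rw [norm_gaussWin, Real.exp_le_one_iff, neg_mul, neg_nonpos]
  positivity

@[fun_prop]
lemma continuous_gaussWin : Continuous (gaussWin (ι := ι)) := by
  unfold gaussWin
  fun_prop

lemma integrable_gaussWin : Integrable (gaussWin (ι := ι)) := by
  simpa [gaussWin] using! GaussianFourier.integrable_cexp_neg_mul_sq_norm_add
    (V := EuclideanSpace ℝ ι) (b := Real.pi) (by simpa using Real.pi_pos) 0 0

lemma fourier_gaussWin : 𝓕 (gaussWin (ι := ι)) = gaussWin := by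
  have hπ : (Real.pi : ℂ) ≠ 0 := by exact_mod_cast Real.pi_ne_zero
  ext ω
  have h := fourier_gaussian_innerProductSpace (V := EuclideanSpace ℝ ι) (b := Real.pi)
    (by simpa using Real.pi_pos) ω
  rw [div_self hπ, Complex.one_cpow, one_mul, neg_mul, neg_div, pow_two (Real.pi : ℂ), mul_assoc,
    mul_div_cancel_left₀ _ hπ] at h
  simpa only [gaussWin, neg_mul] using! h

lemma integrable_mul_gaussWin_sub {F : EuclideanSpace ℝ ι → ℂ} (hF : Integrable F)
    (x : EuclideanSpace ℝ ι) : Integrable fun t ↦ F t * gaussWin (t - x) :=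
  hF.mul_bdd (c := 1) (Continuous.aestronglyMeasurable (by fun_prop))
    (.of_forall fun _ ↦ norm_gaussWin_le_one _)

/-- The Gaussian density turning the squared window into the window itself by convolution:
`gaussKernel * gaussWin ^ 2 = gaussWin`. It serves to replace the window `G ^ 2`, for which the
short-time Fourier transform of a product is a convolution, by `G`. -/
noncomputable def gaussKernel (u : EuclideanSpace ℝ ι) : ℂ :=
  2 ^ Fintype.card ι * gaussWin u ^ 2

@[fun_prop]
lemma continuous_gaussKernel : Continuous (gaussKernel (ι := ι)) := by
  unfold gaussKernel
  fun_prop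

@[fun_prop]
lemma measurable_gaussKernel : Measurable (gaussKernel (ι := ι)) :=
  continuous_gaussKernel.measurable

lemma integrable_gaussKernel : Integrable (gaussKernel (ι := ι)) := by
  have h := (integrable_mul_gaussWin_sub (integrable_gaussWin (ι := ι)) 0).const_mul
    (2 ^ Fintype.card ι)
  simpa only [sub_zero, ← sq] using! h

lemma integral_rexp_neg_four_pi_mul_sq_norm :
    ∫ u : EuclideanSpace ℝ ι, Real.exp (-(4 * Real.pi) * ‖u‖ ^ 2) = (2 ^ Fintype.card ι)⁻¹ := by
  have hbase : Real.pi / (4 * Real.pi) = (2⁻¹ : ℝ) ^ (2 : ℝ) := by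
    rw [Real.rpow_two]
    field_simp
    norm_num
  rw [GaussianFourier.integral_rexp_neg_mul_sq_norm (by positivity), finrank_euclideanSpace, hbase,
    ← Real.rpow_mul (by positivity), mul_div_cancel₀ _ two_ne_zero, Real.rpow_natCast, inv_pow]

lemma integral_rexp_neg_two_pi_mul_sq_norm :
    ∫ u : EuclideanSpace ℝ ι, Real.exp (-(2 * Real.pi) * ‖u‖ ^ 2) = (√2 ^ Fintype.card ι)⁻¹ := by
  have hbase : Real.pi / (2 * Real.pi) = (√2)⁻¹ ^ (2 : ℝ) := by
    rw [Real.rpow_two, inv_pow, Real.sq_sqrt zero_le_two]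
    field_simp
  rw [GaussianFourier.integral_rexp_neg_mul_sq_norm (by positivity), finrank_euclideanSpace, hbase,
    ← Real.rpow_mul (by positivity), mul_div_cancel₀ _ two_ne_zero, Real.rpow_natCast, inv_pow]

lemma gaussKernel_sub_mul_gaussWin_sq (x y t : EuclideanSpace ℝ ι) :
    gaussKernel (y - x) * gaussWin (t - y) ^ 2 =
      gaussWin (t - x) * (2 ^ Fintype.card ι *
        (Real.exp (-(4 * Real.pi) * ‖y - (2⁻¹ : ℝ) • (x + t)‖ ^ 2) : ℝ)) := by
  have parallelogram : 2 * ‖y - x‖ ^ 2 + 2 * ‖t - y‖ ^ 2 =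
      ‖t - x‖ ^ 2 + 4 * ‖y - (2⁻¹ : ℝ) • (x + t)‖ ^ 2 := by
    have h := parallelogram_law_with_norm ℝ (y - x) (t - y)
    have hsum : y - x + (t - y) = t - x := by abel
    have hdiff : y - x - (t - y) = (2 : ℝ) • (y - (2⁻¹ : ℝ) • (x + t)) := by module
    rw [hsum, hdiff, norm_smul, Real.norm_two] at h
    linarith
  have hexp : Real.exp (-Real.pi * ‖y - x‖ ^ 2) ^ 2 * Real.exp (-Real.pi * ‖t - y‖ ^ 2) ^ 2 =
      Real.exp (-Real.pi * ‖t - x‖ ^ 2) *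
        Real.exp (-(4 * Real.pi) * ‖y - (2⁻¹ : ℝ) • (x + t)‖ ^ 2) := by
    rw [← Real.exp_nat_mul, ← Real.exp_nat_mul, ← Real.exp_add, ← Real.exp_add]
    congr 1
    push_cast
    linear_combination -Real.pi * parallelogram
  rw [gaussKernel, gaussWin_eq_ofReal, gaussWin_eq_ofReal, gaussWin_eq_ofReal, mul_assoc,
    ← Complex.ofReal_pow, ← Complex.ofReal_pow, ← Complex.ofReal_mul, hexp, Complex.ofReal_mul,
    mul_left_comm]

lemma integral_gaussKernel_sub_mul_gaussWin_sq (x t : EuclideanSpace ℝ ι) :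
    ∫ y, gaussKernel (y - x) * gaussWin (t - y) ^ 2 = gaussWin (t - x) := by
  simp only [gaussKernel_sub_mul_gaussWin_sq, integral_const_mul, integral_complex_ofReal]
  rw [integral_sub_right_eq_self fun y : EuclideanSpace ℝ ι ↦
    Real.exp (-(4 * Real.pi) * ‖y‖ ^ 2), integral_rexp_neg_four_pi_mul_sq_norm]
  simp

lemma lintegral_enorm_gaussKernel :
    ∫⁻ u : EuclideanSpace ℝ ι, ‖gaussKernel u‖ₑ = ENNReal.ofReal (√2 ^ Fintype.card ι) := by
  have hnorm (u : EuclideanSpace ℝ ι) :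
      ‖gaussKernel u‖ = 2 ^ Fintype.card ι * Real.exp (-(2 * Real.pi) * ‖u‖ ^ 2) := by
    rw [gaussKernel, norm_mul, norm_pow, norm_pow, norm_gaussWin, ← Real.exp_nat_mul]
    norm_num
    ring_nf
  rw [← ofReal_integral_norm_eq_lintegral_enorm integrable_gaussKernel]
  simp only [hnorm, integral_const_mul, integral_rexp_neg_two_pi_mul_sq_norm]
  congr 1
  rw [← inv_pow, ← mul_pow, ← div_eq_mul_inv, Real.div_sqrt]

end GaussianWindow

section STFT

variable {ι : Type*} [Fintype ι] {a F : EuclideanSpace ℝ ι → ℂ}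

lemma STFT_eq_fourier (F : EuclideanSpace ℝ ι → ℂ) (x ω : EuclideanSpace ℝ ι) :
    STFT F x ω = 𝓕 (fun t ↦ F t * gaussWin (t - x)) ω := by
  rw [STFT, Real.fourier_eq']
  congr 1 with t
  rw [conj_gaussWin, smul_eq_mul, mul_comm, real_inner_comm]
  push_cast
  ring_nf

lemma continuous_STFT (hF : Integrable F) : Continuous (uncurry (STFT F)) := by
  refine continuous_of_dominated (bound := fun t ↦ ‖F t‖) (fun z ↦ ?_) (fun z ↦ ?_) hF.norm
    (.of_forall fun t ↦ ?_)
  · refine (hF.1.mul ?_).mul ?_ <;> refine Continuous.aestronglyMeasurable ?_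
    · simp only [conj_gaussWin]
      fun_prop
    · fun_prop
  · refine .of_forall fun t ↦ ?_
    have hphase : ‖Complex.exp (Complex.I * (-(2 * Real.pi * (inner ℝ z.2 t : ℝ))))‖ = 1 := by
      simpa [mul_comm] using Complex.norm_exp_ofReal_mul_I (-(2 * Real.pi * inner ℝ z.2 t))
    rw [norm_mul, norm_mul, hphase, mul_one, conj_gaussWin]
    exact mul_le_of_le_one_right (norm_nonneg _) (norm_gaussWin_le_one _)
  · simp only [conj_gaussWin]
    fun_prop

lemma measurable_STFT (hF : Integrable F) : Measurable (uncurry (STFT F)) :=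
  (continuous_STFT hF).measurable

lemma STFT_fourier (hF : Integrable F) (x ω : EuclideanSpace ℝ ι) :
    STFT (𝓕 F) x ω = 𝐞 (-⟪x, ω⟫) • STFT F (-ω) x := by
  have hwin : Integrable fun t ↦ gaussWin (t - x) := integrable_gaussWin.comp_sub_right x
  calc STFT (𝓕 F) x ω
      = ∫ t, 𝓕 F t * 𝐞 (-⟪t, ω⟫) • gaussWin (t - x) := by
        simp only [STFT_eq_fourier, Real.fourier_eq _ ω, mul_smul_comm]
    _ = ∫ t, F t * 𝓕 (fun s ↦ gaussWin (s - x) : EuclideanSpace ℝ ι → ℂ) (t + ω) := by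
        rw [integral_fourier_mul_eq_integral_mul_fourier hF
          ((integrable_fourierChar_smul_iff ω).2 hwin)]
        simp only [fourier_fourierChar_smul]
    _ = ∫ t, 𝐞 (-⟪x, ω⟫) • 𝐞 (-⟪t, x⟫) • (F t * gaussWin (t - -ω)) := by
        simp only [fourier_comp_sub_right, fourier_gaussWin, smul_smul,
          ← AddChar.map_add_eq_mul, inner_add_right, neg_add, mul_smul_comm, sub_neg_eq_add,
          real_inner_comm x, add_comm]
    _ = 𝐞 (-⟪x, ω⟫) • STFT F (-ω) x := by
        rw [STFT_eq_fourier, Real.fourier_eq]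
        simp only [Circle.smul_def, integral_smul]

lemma enorm_STFT_fourier (hF : Integrable F) (x ω : EuclideanSpace ℝ ι) :
    ‖STFT (𝓕 F) x ω‖ₑ = ‖STFT F (-ω) x‖ₑ := by
  rw [STFT_fourier hF, ← ofReal_norm, Circle.norm_smul, ofReal_norm]

lemma integrable_STFT_left (hF : Integrable F) (ω : EuclideanSpace ℝ ι) :
    Integrable fun x ↦ STFT F x ω := by
  have h := ((integrable_fourierChar_smul_iff ω).2 hF).integrable_convolution
    (ContinuousLinearMap.mul ℂ ℂ) integrable_gaussWin
  refine h.congr (.of_forall fun x ↦ ?_)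
  simp only [STFT_eq_fourier, Real.fourier_eq, MeasureTheory.convolution,
    ContinuousLinearMap.mul_apply', smul_mul_assoc, gaussWin_sub_comm x]

lemma integrable_STFT (ha : IsFourierInvertible a) (x : EuclideanSpace ℝ ι) :
    Integrable (STFT a x) := by
  have hinv : Integrable (𝓕⁻ a) := ha.fourierInv.integrable
  have h := (integrable_fourierChar_smul_iff x).2 (integrable_STFT_left hinv x).comp_neg
  rw [← ha.fourier_fourierInv]
  refine h.congr (.of_forall fun ω ↦ ?_)
  simp only [STFT_fourier hinv, real_inner_comm]

lemma isFourierInvertible_mul_gaussWin_sub (ha : IsFourierInvertible a)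
    (x : EuclideanSpace ℝ ι) : IsFourierInvertible fun t ↦ a t * gaussWin (t - x) where
  continuous := ha.continuous.mul (by fun_prop)
  integrable := integrable_mul_gaussWin_sub ha.integrable x
  integrable_fourier := (integrable_STFT ha x).congr (.of_forall (STFT_eq_fourier a x))

lemma fourier_mul_mul_gaussWin_sq (ha : IsFourierInvertible a) (hF : Integrable F)
    (y ω : EuclideanSpace ℝ ι) :
    𝓕 (fun t ↦ a t * F t * gaussWin (t - y) ^ 2) ω = ∫ ξ, STFT a y (ω - ξ) * STFT F y ξ := by
  simp only [STFT_eq_fourier]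
  rw [← (isFourierInvertible_mul_gaussWin_sub ha y).fourier_mul_eq_integral
    (integrable_mul_gaussWin_sub hF y)]
  simp only [mul_mul_mul_comm, sq]

lemma STFT_eq_integral_gaussKernel_mul_fourier (hF : Integrable F) (x ω : EuclideanSpace ℝ ι) :
    STFT F x ω = ∫ y, gaussKernel (y - x) * 𝓕 (fun t ↦ F t * gaussWin (t - y) ^ 2) ω := by
  have hint : Integrable (uncurry fun y t ↦ gaussKernel (y - x) * (F t * gaussWin (t - y) ^ 2))
      (volume.prod volume) := by
    simp only [uncurry_def, ← mul_assoc]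
    refine ((integrable_gaussKernel.comp_sub_right x).mul_prod hF).mul_bdd (c := 1)
      (Continuous.aestronglyMeasurable (by fun_prop)) (.of_forall fun z ↦ ?_)
    rw [norm_pow]
    exact pow_le_one₀ (norm_nonneg _) (norm_gaussWin_le_one _)
  calc STFT F x ω
      = 𝓕 (fun t ↦ ∫ y, gaussKernel (y - x) * (F t * gaussWin (t - y) ^ 2)) ω := by
        simp only [STFT_eq_fourier, mul_left_comm, integral_const_mul,
          integral_gaussKernel_sub_mul_gaussWin_sq]
    _ = ∫ y, gaussKernel (y - x) * 𝓕 (fun t ↦ F t * gaussWin (t - y) ^ 2) ω := by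
        rw [fourier_integral_eq_integral_fourier hint]
        simp only [Real.fourier_eq, ← mul_smul_comm, integral_const_mul]

lemma enorm_STFT_mul_le (ha : IsFourierInvertible a) (hF : Integrable F)
    (x ω : EuclideanSpace ℝ ι) :
    ‖STFT (fun t ↦ a t * F t) x ω‖ₑ ≤
      ∫⁻ z : EuclideanSpace ℝ ι × EuclideanSpace ℝ ι,
        ‖gaussKernel (z.1 - x)‖ₑ * ‖STFT a z.1 (ω - z.2)‖ₑ * ‖uncurry (STFT F) z‖ₑ
        ∂(volume.prod volume) := by
  have hSTFTa : Measurable (uncurry (STFT a)) := measurable_STFT ha.integrable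
  have hSTFTF : Measurable (uncurry (STFT F)) := measurable_STFT hF
  calc ‖STFT (fun t ↦ a t * F t) x ω‖ₑ
      = ‖∫ y, gaussKernel (y - x) * ∫ ξ, STFT a y (ω - ξ) * STFT F y ξ‖ₑ := by
        rw [STFT_eq_integral_gaussKernel_mul_fourier (ha.integrable_mul hF)]
        simp only [fourier_mul_mul_gaussWin_sq ha hF]
    _ ≤ ∫⁻ y, ‖gaussKernel (y - x)‖ₑ * ∫⁻ ξ, ‖STFT a y (ω - ξ) * STFT F y ξ‖ₑ := by
        refine (enorm_integral_le_lintegral_enorm _).trans (lintegral_mono fun y ↦ ?_)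
        rw [enorm_mul]
        gcongr
        exact enorm_integral_le_lintegral_enorm _
    _ = _ := by
        rw [lintegral_prod _ (Measurable.aemeasurable (by fun_prop))]
        refine lintegral_congr fun y ↦ ?_
        simp only [mul_assoc, uncurry_apply_pair, enorm_mul]
        rw [lintegral_const_mul' _ _ enorm_ne_top]

end STFT

section ModulationNorm

variable {ι : Type*} [Fintype ι] {a F : EuclideanSpace ℝ ι → ℂ} {p : ℝ≥0∞}

lemma modNorm_self_eq_eLpNorm (hp : p ≠ 0) (hF : Integrable F) :
    modNorm p p F = eLpNorm (uncurry (STFT F)) p (volume.prod volume) := by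
  have hmeas : Measurable fun z ↦ ‖uncurry (STFT F) z‖ₑ :=
    (measurable_STFT hF).enorm
  rw [← eLpNorm_enorm, ← eLpNorm_eLpNorm_eq_eLpNorm_prod hmeas, modNorm, lqNorm_eq_eLpNorm hp]
  simp only [lqNorm_eq_eLpNorm hp, ← enorm_eq_nnnorm, uncurry_apply_pair]

lemma modNorm_fourier (hp : p ≠ 0) (hF : IsFourierInvertible F) :
    modNorm p p (𝓕 F) = modNorm p p F := by
  have hrot : MeasurePreserving (fun z : EuclideanSpace ℝ ι × EuclideanSpace ℝ ι ↦ (-z.2, z.1))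
      (volume.prod volume) (volume.prod volume) :=
    ((Measure.measurePreserving_neg volume).prod (.id volume)).comp Measure.measurePreserving_swap
  rw [modNorm_self_eq_eLpNorm hp hF.integrable_fourier, modNorm_self_eq_eLpNorm hp hF.integrable,
    ← eLpNorm_comp_measurePreserving (continuous_STFT hF.integrable).aestronglyMeasurable hrot]
  exact eLpNorm_congr_enorm_ae (.of_forall fun z ↦ enorm_STFT_fourier hF.integrable z.1 z.2)

lemma ae_lintegral_enorm_STFT_le_wFLNorm (F : EuclideanSpace ℝ ι → ℂ) :
    ∀ᵐ x, ∫⁻ ω, ‖STFT F x ω‖ₑ ≤ wFLNorm 1 ∞ F := by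
  simpa [wFLNorm, lqNorm, enorm_eq_nnnorm] using
    ENNReal.ae_le_essSup fun x ↦ ∫⁻ ω, ‖STFT F x ω‖ₑ

lemma ae_lintegral_gaussKernel_mul_STFT_left_le (hF : Integrable F) :
    ∀ᵐ w : EuclideanSpace ℝ ι × EuclideanSpace ℝ ι ∂(volume.prod volume),
      ∫⁻ z, ‖gaussKernel (w.1 - z.1)‖ₑ * ‖STFT F w.1 (z.2 - w.2)‖ₑ ∂(volume.prod volume) ≤
        ENNReal.ofReal (√2 ^ Fintype.card ι) * wFLNorm 1 ∞ F := by
  have hSTFT : Measurable (uncurry (STFT F)) := measurable_STFT hF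
  filter_upwards [Measure.quasiMeasurePreserving_fst.ae (ae_lintegral_enorm_STFT_le_wFLNorm F)]
    with w hw
  rw [lintegral_prod_mul (f := fun x ↦ ‖gaussKernel (w.1 - x)‖ₑ)
    (g := fun ω ↦ ‖STFT F w.1 (ω - w.2)‖ₑ) (Measurable.aemeasurable (by fun_prop))
    (Measurable.aemeasurable (by fun_prop)),
    lintegral_sub_left_eq_self (fun x ↦ ‖gaussKernel x‖ₑ),
    lintegral_sub_right_eq_self (fun ω ↦ ‖STFT F w.1 ω‖ₑ), lintegral_enorm_gaussKernel]
  gcongr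

lemma lintegral_gaussKernel_mul_STFT_right_le (hF : Integrable F)
    (z : EuclideanSpace ℝ ι × EuclideanSpace ℝ ι) :
    ∫⁻ w, ‖gaussKernel (w.1 - z.1)‖ₑ * ‖STFT F w.1 (z.2 - w.2)‖ₑ ∂(volume.prod volume) ≤
      ENNReal.ofReal (√2 ^ Fintype.card ι) * wFLNorm 1 ∞ F := by
  have hSTFT : Measurable (uncurry (STFT F)) := measurable_STFT hF
  calc ∫⁻ w, ‖gaussKernel (w.1 - z.1)‖ₑ * ‖STFT F w.1 (z.2 - w.2)‖ₑ ∂(volume.prod volume)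
      = ∫⁻ y, ‖gaussKernel (y - z.1)‖ₑ * ∫⁻ ω, ‖STFT F y ω‖ₑ := by
        rw [lintegral_prod _ (Measurable.aemeasurable (by fun_prop))]
        refine lintegral_congr fun y ↦ ?_
        dsimp only
        rw [lintegral_const_mul' _ _ enorm_ne_top,
          lintegral_sub_left_eq_self (fun ω ↦ ‖STFT F y ω‖ₑ)]
    _ ≤ ∫⁻ y, ‖gaussKernel (y - z.1)‖ₑ * wFLNorm 1 ∞ F := by
        refine lintegral_mono_ae ?_
        filter_upwards [ae_lintegral_enorm_STFT_le_wFLNorm F] with y hy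
        gcongr
    _ = ENNReal.ofReal (√2 ^ Fintype.card ι) * wFLNorm 1 ∞ F := by
        rw [lintegral_mul_const _ (by fun_prop),
          lintegral_sub_right_eq_self (fun y ↦ ‖gaussKernel y‖ₑ), lintegral_enorm_gaussKernel]

lemma modNorm_mul_le (ha : IsFourierInvertible a) (hF : Integrable F) (hp : 1 ≤ p) :
    modNorm p p (fun t ↦ a t * F t) ≤
      ENNReal.ofReal (√2 ^ Fintype.card ι) * wFLNorm 1 ∞ a * modNorm p p F := by
  have hp₀ : p ≠ 0 := (one_pos.trans_le hp).ne'
  have hSTFT : Measurable (uncurry (STFT a)) := measurable_STFT ha.integrable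
  calc modNorm p p (fun t ↦ a t * F t)
      = eLpNorm (uncurry (STFT fun t ↦ a t * F t)) p (volume.prod volume) :=
        modNorm_self_eq_eLpNorm hp₀ (ha.integrable_mul hF)
    _ ≤ eLpNorm (fun z : EuclideanSpace ℝ ι × EuclideanSpace ℝ ι ↦
          ∫⁻ w, ‖gaussKernel (w.1 - z.1)‖ₑ * ‖STFT a w.1 (z.2 - w.2)‖ₑ * ‖uncurry (STFT F) w‖ₑ
            ∂(volume.prod volume)) p (volume.prod volume) :=
        eLpNorm_mono_enorm fun z ↦ enorm_STFT_mul_le ha hF z.1 z.2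
    _ ≤ ENNReal.ofReal (√2 ^ Fintype.card ι) * wFLNorm 1 ∞ a *
          eLpNorm (fun w ↦ ‖uncurry (STFT F) w‖ₑ) p (volume.prod volume) :=
        eLpNorm_lintegral_mul_le_of_schur (by fun_prop)
          (measurable_STFT hF).enorm
          (.of_forall (lintegral_gaussKernel_mul_STFT_right_le ha.integrable))
          (ae_lintegral_gaussKernel_mul_STFT_left_le ha.integrable) hp
    _ = ENNReal.ofReal (√2 ^ Fintype.card ι) * wFLNorm 1 ∞ a * modNorm p p F := by
        rw [eLpNorm_enorm, modNorm_self_eq_eLpNorm hp₀ hF]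

end ModulationNorm

section KohnNirenberg

variable {d : ℕ}

lemma fTrans_eq_fourier {ι : Type*} [Fintype ι] (f : EuclideanSpace ℝ ι → ℂ) :
    fTrans f = 𝓕 f := by
  ext ω
  rw [fTrans, Real.fourier_eq']
  congr 1 with t
  rw [smul_eq_mul, mul_comm]
  push_cast
  ring_nf

lemma xpart_pairE (x ω : EuclideanSpace ℝ (Fin d)) : xpart (pairE x ω) = x := rfl

lemma wpart_pairE (x ω : EuclideanSpace ℝ (Fin d)) : wpart (pairE x ω) = ω := rfl

lemma KNop_tensor_eq (a₁ a₂ f : EuclideanSpace ℝ (Fin d) → ℂ) :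
    KNop (fun z ↦ a₁ (xpart z) * a₂ (wpart z)) f =
      fun x ↦ a₁ x * 𝓕⁻ (fun ω ↦ a₂ ω * 𝓕 f ω) x := by
  ext x
  rw [KNop, Real.fourierInv_eq', ← integral_const_mul]
  congr 1 with ω
  rw [xpart_pairE, wpart_pairE, fTrans_eq_fourier, smul_eq_mul, real_inner_comm]
  push_cast
  ring_nf

theorem kn_tensor_bounded_on_Mp_general {p : ℝ≥0∞} (hp : 1 ≤ p)
    {a₁ a₂ f : EuclideanSpace ℝ (Fin d) → ℂ} (ha₁ : IsFourierInvertible a₁)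
    (ha₂ : IsFourierInvertible a₂) (hf : IsFourierInvertible f) :
    modNorm p p (KNop (fun z ↦ a₁ (xpart z) * a₂ (wpart z)) f) ≤
      ENNReal.ofReal (2 ^ d) * wFLNorm 1 ∞ a₁ * wFLNorm 1 ∞ a₂ * modNorm p p f := by
  have hp₀ : p ≠ 0 := (one_pos.trans_le hp).ne'
  have hg : IsFourierInvertible fun ω ↦ a₂ ω * 𝓕 f ω := ha₂.mul hf.fourier
  set C : ℝ≥0∞ := ENNReal.ofReal (√2 ^ Fintype.card (Fin d)) with hC
  have hCsq : C * C = ENNReal.ofReal (2 ^ d) := by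
    rw [hC, ← ENNReal.ofReal_mul (by positivity), ← mul_pow, Real.mul_self_sqrt zero_le_two,
      Fintype.card_fin]
  calc modNorm p p (KNop (fun z ↦ a₁ (xpart z) * a₂ (wpart z)) f)
      = modNorm p p (fun x ↦ a₁ x * 𝓕⁻ (fun ω ↦ a₂ ω * 𝓕 f ω) x) := by rw [KNop_tensor_eq]
    _ ≤ C * wFLNorm 1 ∞ a₁ * modNorm p p (𝓕⁻ fun ω ↦ a₂ ω * 𝓕 f ω) :=
        modNorm_mul_le ha₁ hg.fourierInv.integrable hp
    _ = C * wFLNorm 1 ∞ a₁ * modNorm p p (fun ω ↦ a₂ ω * 𝓕 f ω) := by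
        rw [← modNorm_fourier hp₀ hg.fourierInv, hg.fourier_fourierInv]
    _ ≤ C * wFLNorm 1 ∞ a₁ * (C * wFLNorm 1 ∞ a₂ * modNorm p p (𝓕 f)) := by
        gcongr
        exact modNorm_mul_le ha₂ hf.fourier.integrable hp
    _ = ENNReal.ofReal (2 ^ d) * wFLNorm 1 ∞ a₁ * wFLNorm 1 ∞ a₂ * modNorm p p f := by
        rw [modNorm_fourier hp₀ hf, ← hCsq]
        ring

end KohnNirenberg

/-- tensor-product symbols with both factors in `W(𝓕L¹,L^∞)` give
operators bounded on `M^p`. -/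
theorem kn_tensor_bounded_on_Mp (d : ℕ) (p : ℝ≥0∞) (hp : 1 ≤ p) :
    ∃ C : ℝ, 0 < C ∧
      ∀ (a₁ a₂ : SchwartzMap (EuclideanSpace ℝ (Fin d)) ℂ)
        (f : SchwartzMap (EuclideanSpace ℝ (Fin d)) ℂ),
        modNorm p p (KNop (fun z => a₁ (xpart z) * a₂ (wpart z)) ⇑f) ≤
          ENNReal.ofReal C * wFLNorm 1 ∞ ⇑a₁ * wFLNorm 1 ∞ ⇑a₂ *
            modNorm p p ⇑f := by
  exact ⟨2 ^ d, by positivity, fun a₁ a₂ f ↦ kn_tensor_bounded_on_Mp_general hp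
    (isFourierInvertible_schwartz a₁) (isFourierInvertible_schwartz a₂)
    (isFourierInvertible_schwartz f)⟩
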